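/- arXiv:1308.2455 — 2 statements merged into one kernel-verified Lean document; each statement's English description precedes it below -/
import Mathlib

section
/- (Relativistic helicity conservation.) Let c > 0, let U : ℝ⁴ → ℝ⁴ be a C² vector field generating a global flow φ_s (jointly C² in (s, x), each φ_s a C² diffeomorphism of ℝ⁴, φ₀ = id, ∂_s φ_s(x) = U(φ_s(x))), let P : ℝ⁴ → ℝ⁴ be a C² covector field and f : ℝ⁴ → ℝ be C¹ with Σ_μ (U^μ ∂_μ P_ν + P_μ ∂_ν U^μ) = c⁻¹ ∂_ν f everywhere for every ν (i.e., L_U P = c⁻¹ df). Set M_{μν} = ∂_μ P_ν − ∂_ν P_μ. Let V₀ ⊂ ℝ³ be a compact set with C¹ boundary such that the closure of {y ∈ ℝ³ : M(0, y) ≠ 0} is contained in the interior of V₀. Define ψ_s : ℝ³ → ℝ⁴ by ψ_s(y) = φ_s(0, y¹, y², y³), and define the relativistic helicity 𝔠(s) = ∫_{V₀} W(ψ_s(y))(∂ψ_s/∂y¹, ∂ψ_s/∂y², ∂ψ_s/∂y³) d³y, where for x ∈ ℝ⁴ the alternating trilinear form W(x) is W(x)(u, v, w) = (P_μ(x)u^μ)(M_{αβ}(x)v^α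 w^β) + (P_μ(x)v^μ)(M_{αβ}(x)w^α u^β) + (P_μ(x)w^μ)(M_{αβ}(x)u^α v^β). Then 𝔠(s) is independent of s. -/
open MeasureTheory

noncomputable section

abbrev V4 := Fin 4 → ℝ

/-- Partial derivative ∂_μ of a scalar function on ℝ⁴. -/
def pd4 (μ : Fin 4) (f : V4 → ℝ) (x : V4) : ℝ := fderiv ℝ f x (Pi.single μ 1)

/-- Circulation ∮_γ P = ∫₀¹ P_μ(γ(τ)) (dγ^μ/dτ) dτ of a covector field along a loop. -/
def circulation (P : V4 → V4) (γ : ℝ → V4) : ℝ :=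
  ∫ τ in (0:ℝ)..1, ∑ μ, P (γ τ) μ * deriv (fun t => γ t μ) τ

/-- Lie derivative of a covector field: (L_U P)_ν = U^μ ∂_μ P_ν + P_μ ∂_ν U^μ. -/
def lieDeriv1 (U P : V4 → V4) (x : V4) : V4 := fun ν =>
  ∑ μ, (U x μ * pd4 μ (fun y => P y ν) x + P x μ * pd4 ν (fun y => U y μ) x)

abbrev V3 := Fin 3 → ℝ

/-- Vorticity 2-form components M_{μν} = ∂_μ P_ν − ∂_ν P_μ of a covector field P. -/
def vort (P : V4 → V4) (μ ν : Fin 4) (x : V4) : ℝ :=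
  pd4 μ (fun y => P y ν) x - pd4 ν (fun y => P y μ) x

/-- The helicity 3-form P ∧ dP evaluated on three tangent vectors:
    W(u,v,w) = P(u)M(v,w) + P(v)M(w,u) + P(w)M(u,v). -/
def Wform (P : V4 → V4) (x : V4) (u v w : V4) : ℝ :=
  (∑ μ, P x μ * u μ) * (∑ α, ∑ β, vort P α β x * v α * w β)
    + (∑ μ, P x μ * v μ) * (∑ α, ∑ β, vort P α β x * w α * u β)
    + (∑ μ, P x μ * w μ) * (∑ α, ∑ β, vort P α β x * u α * v β)

/-- Embedding of ℝ³ into the initial plane {x⁰ = 0} of ℝ⁴. -/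
def emb (y : V3) : V4 := ![0, y 0, y 1, y 2]

/-- The relativistic helicity 𝔠(s): the integral of P ∧ dP over the co-moving
    volume φ_s(V₀), expressed by pulling back along ψ_s(y) = φ_s(0, y). -/
def relHelicity (φ : ℝ → V4 → V4) (P : V4 → V4) (V₀ : Set V3) (s : ℝ) : ℝ :=
  ∫ y in V₀,
    Wform P (φ s (emb y))
      (fderiv ℝ (fun z => φ s (emb z)) y (Pi.single 0 1))
      (fderiv ℝ (fun z => φ s (emb z)) y (Pi.single 1 1))
      (fderiv ℝ (fun z => φ s (emb z)) y (Pi.single 2 1))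

/-!
Let `ω s` be the pullback of the covector field `P` by `ψ s`. Since `L_U P` is exact, so is the time
derivative of `ω s`, and integrating it along the flow gives `ω s = ω 0 + dg`. Hence `dω s = dω 0`,
and the helicity forms `ω ∧ dω` at times `s` and `0` differ by `dg ∧ dω 0 = d(g • dω 0)`. The
vorticity `dω 0` is supported in the compact set `V₀`, so this difference integrates to zero by
the Stokes theorem for compactly supported forms.
-/

section ExteriorCalculus

open ContinuousAlternatingMap

variable {E X F : Type*} [NormedAddCommGroup E] [NormedSpace ℝ E]
  [NormedAddCommGroup X] [NormedSpace ℝ X] [NormedAddCommGroup F] [NormedSpace ℝ F] {n : ℕ}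

/-- The exterior product `ℓ ∧ β` of a covector and an alternating form, encoded as the
alternatization of `x ↦ ℓ x • β` so that it matches `extDeriv` without a combinatorial factor. -/
def covectorWedge (ℓ : E →L[ℝ] ℝ) (β : E [⋀^Fin n]→L[ℝ] F) : E [⋀^Fin (n + 1)]→L[ℝ] F :=
  alternatizeUncurryFin (ℓ.smulRight β)

theorem covectorWedge_apply (ℓ : E →L[ℝ] ℝ) (β : E [⋀^Fin n]→L[ℝ] F) (v : Fin (n + 1) → E) :
    covectorWedge ℓ β v = ∑ i, (-1) ^ i.val • ℓ (v i) • β (i.removeNth v) := by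
  simp [covectorWedge, alternatizeUncurryFin_apply]

theorem covectorWedge_add_left (ℓ₁ ℓ₂ : E →L[ℝ] ℝ) (β : E [⋀^Fin n]→L[ℝ] F) :
    covectorWedge (ℓ₁ + ℓ₂) β = covectorWedge ℓ₁ β + covectorWedge ℓ₂ β := by
  ext v
  simp [covectorWedge_apply, add_smul, smul_add, Finset.sum_add_distrib]

theorem covectorWedge_zero_right (ℓ : E →L[ℝ] ℝ) :
    covectorWedge ℓ (0 : E [⋀^Fin n]→L[ℝ] F) = 0 := by
  ext v
  simp [covectorWedge_apply]

theorem covectorWedge_compContinuousLinearMap (ℓ : X →L[ℝ] ℝ) (β : X [⋀^Fin n]→L[ℝ] F)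
    (A : E →L[ℝ] X) :
    (covectorWedge ℓ β).compContinuousLinearMap A =
      covectorWedge (ℓ ∘L A) (β.compContinuousLinearMap A) := by
  ext v
  simp only [ContinuousAlternatingMap.compContinuousLinearMap_apply, covectorWedge_apply,
    ContinuousLinearMap.comp_apply, Function.comp_def]
  rfl

theorem continuous_covectorWedge_apply {T : Type*} [TopologicalSpace T] {ℓ : T → E →L[ℝ] ℝ}
    {β : T → E [⋀^Fin n]→L[ℝ] F} (hℓ : Continuous ℓ) (hβ : Continuous β) (v : Fin (n + 1) → E) :
    Continuous fun t => covectorWedge (ℓ t) (β t) v := by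
  have hβv (w : Fin n → E) : Continuous fun t => β t w :=
    (ContinuousAlternatingMap.apply ℝ E F w).continuous.comp hβ
  simp only [covectorWedge_apply]
  fun_prop

theorem extDeriv_smul_eq_covectorWedge_add {g : E → ℝ} {β : E → E [⋀^Fin n]→L[ℝ] F} {x : E}
    (hg : DifferentiableAt ℝ g x) (hβ : DifferentiableAt ℝ β x) :
    extDeriv (g • β) x = covectorWedge (fderiv ℝ g x) (β x) + g x • extDeriv β x := by
  simp only [extDeriv, covectorWedge, fderiv_smul hg hβ, alternatizeUncurryFin_add,
    alternatizeUncurryFin_smul, add_comm]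

/-- The identification of covectors with alternating forms of degree one. It lets a `1`-form be
an ordinary map `E → E →L[ℝ] F` and still be fed to `extDeriv`. -/
def oneFormLIE (E F : Type*) [NormedAddCommGroup E] [NormedSpace ℝ E] [NormedAddCommGroup F]
    [NormedSpace ℝ F] : (E →L[ℝ] F) ≃ₗᵢ[ℝ] E [⋀^Fin 1]→L[ℝ] F :=
  ofSubsingletonLIE 0

theorem oneFormLIE_apply (ℓ : E →L[ℝ] F) (v : Fin 1 → E) : oneFormLIE E F ℓ v = ℓ (v 0) :=
  rfl

/-- The exterior derivative `dα` of a `1`-form, normalized so that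
`dα (u, v) = (D_u α) v - (D_v α) u`. -/
def oneFormExtDeriv (α : E → E →L[ℝ] F) : E → E [⋀^Fin 2]→L[ℝ] F :=
  extDeriv fun y => oneFormLIE E F (α y)

theorem oneFormExtDeriv_eq_alternatizeUncurryFin (α : E → E →L[ℝ] F) (x : E) :
    oneFormExtDeriv α x = alternatizeUncurryFin
      ((oneFormLIE E F : (E →L[ℝ] F) →L[ℝ] _) ∘L fderiv ℝ α x) :=
  congrArg alternatizeUncurryFin (LinearIsometryEquiv.comp_fderiv _)

theorem oneFormExtDeriv_apply (α : E → E →L[ℝ] F) (x : E) (v : Fin 2 → E) :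
    oneFormExtDeriv α x v = fderiv ℝ α x (v 0) (v 1) - fderiv ℝ α x (v 1) (v 0) := by
  simp [oneFormExtDeriv_eq_alternatizeUncurryFin, alternatizeUncurryFin_apply, oneFormLIE_apply,
    Fin.sum_univ_two, Fin.removeNth, sub_eq_add_neg]

theorem contDiff_oneFormExtDeriv {α : E → E →L[ℝ] F} (hα : ContDiff ℝ 2 α) :
    ContDiff ℝ 1 (oneFormExtDeriv α) := by
  have hα' : ContDiff ℝ 1 (fderiv ℝ α) := hα.fderiv_right (by norm_num)
  rw [funext (oneFormExtDeriv_eq_alternatizeUncurryFin α)]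
  exact (alternatizeUncurryFinCLM ℝ E F).contDiff.comp (contDiff_const.clm_comp hα')

/-- The pullback `ψ^* α` of a `1`-form by a differentiable map; it has the junk value `0` where `ψ`
is not differentiable. -/
def oneFormPullback (α : X → X →L[ℝ] F) (ψ : E → X) (y : E) : E →L[ℝ] F :=
  α (ψ y) ∘L fderiv ℝ ψ y

theorem contDiff_oneFormPullback {α : X → X →L[ℝ] F} (hα : ContDiff ℝ 1 α) {ψ : E → X}
    (hψ : ContDiff ℝ 2 ψ) : ContDiff ℝ 1 (oneFormPullback α ψ) :=
  (hα.comp (hψ.of_le (by norm_num))).clm_comp (hψ.fderiv_right (by norm_num))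

theorem oneFormExtDeriv_oneFormPullback {α : X → X →L[ℝ] F} {ψ : E → X} {y : E}
    (hα : DifferentiableAt ℝ α (ψ y)) (hψ : ContDiffAt ℝ 2 ψ y) :
    oneFormExtDeriv (oneFormPullback α ψ) y =
      (oneFormExtDeriv α (ψ y)).compContinuousLinearMap (fderiv ℝ ψ y) := by
  refine Eq.trans ?_ (extDeriv_pullback (r := 2) ?_ hψ (by simp))
  · rfl
  · exact (oneFormLIE X F).differentiable.differentiableAt.comp (ψ y) hα

theorem extDeriv_oneFormExtDeriv {α : E → E →L[ℝ] F} (hα : ContDiff ℝ 2 α) :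
    extDeriv (oneFormExtDeriv α) = 0 :=
  extDeriv_extDeriv (r := 2) ((oneFormLIE E F).contDiff.comp hα) (by simp)

theorem extDeriv_oneFormExtDeriv_oneFormPullback {α : X → X →L[ℝ] F} (hα : ContDiff ℝ 2 α)
    {ψ : E → X} (hψ : ContDiff ℝ 2 ψ) :
    extDeriv (oneFormExtDeriv (oneFormPullback α ψ)) = 0 := by
  have hα₁ : Differentiable ℝ α := hα.differentiable (by norm_num)
  have hdα : Differentiable ℝ (oneFormExtDeriv α) :=
    (contDiff_oneFormExtDeriv hα).differentiable (by norm_num)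
  have hpull : oneFormExtDeriv (oneFormPullback α ψ) = fun y =>
      (oneFormExtDeriv α (ψ y)).compContinuousLinearMap (fderiv ℝ ψ y) :=
    funext fun y => oneFormExtDeriv_oneFormPullback (hα₁ (ψ y)) hψ.contDiffAt
  ext1 y
  rw [hpull, extDeriv_pullback (r := 2) (hdα (ψ y)) hψ.contDiffAt (by simp),
    extDeriv_oneFormExtDeriv hα]
  ext
  simp

-- The pullback itself is only `C¹`: the missing derivative is recovered from `dψ^*α = ψ^*dα`, which
-- involves no second derivative of `ψ`.
theorem contDiff_oneFormExtDeriv_oneFormPullback {α : X → X →L[ℝ] F} (hα : ContDiff ℝ 2 α)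
    {ψ : E → X} (hψ : ContDiff ℝ 2 ψ) :
    ContDiff ℝ 1 (oneFormExtDeriv (oneFormPullback α ψ)) := by
  have hψ' : ContDiff ℝ 1 (fderiv ℝ ψ) := hψ.fderiv_right (by norm_num)
  have hα' : ContDiff ℝ 1 fun y => fderiv ℝ α (ψ y) :=
    (hα.fderiv_right (by norm_num)).comp (hψ.of_le (by norm_num))
  have hcomp (y : E) : oneFormExtDeriv (oneFormPullback α ψ) y =
      alternatizeUncurryFin ((oneFormLIE E F : (E →L[ℝ] F) →L[ℝ] _) ∘L
        (ContinuousLinearMap.compL ℝ E X F).flip (fderiv ℝ ψ y) ∘L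
          fderiv ℝ α (ψ y) ∘L fderiv ℝ ψ y) := by
    ext v
    rw [oneFormExtDeriv_oneFormPullback (hα.differentiable (by norm_num) _) hψ.contDiffAt]
    simp [oneFormExtDeriv_apply, alternatizeUncurryFin_apply, oneFormLIE_apply, Fin.sum_univ_two,
      Fin.removeNth, sub_eq_add_neg]
  rw [funext hcomp]
  exact (alternatizeUncurryFinCLM ℝ E F).contDiff.comp <| contDiff_const.clm_comp <|
    ((ContinuousLinearMap.compL ℝ E X F).flip.contDiff.comp hψ').clm_comp (hα'.clm_comp hψ')

theorem oneFormExtDeriv_add_fderiv {α : E → E →L[ℝ] F} (hα : Differentiable ℝ α) {g : E → F}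
    (hg : ContDiff ℝ 2 g) :
    oneFormExtDeriv (α + fderiv ℝ g) = oneFormExtDeriv α := by
  have hg' : Differentiable ℝ (fderiv ℝ g) :=
    (hg.fderiv_right (m := 1) (by norm_num)).differentiable (by norm_num)
  ext y v
  have hsymm : fderiv ℝ (fderiv ℝ g) y (v 0) (v 1) = fderiv ℝ (fderiv ℝ g) y (v 1) (v 0) :=
    hg.contDiffAt.isSymmSndFDerivAt (by simp) (v 0) (v 1)
  simp only [oneFormExtDeriv_apply, fderiv_add (hα y) (hg' y), _root_.add_apply, hsymm]
  abel

/-- The helicity `3`-form `α ∧ dα` of a `1`-form. -/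
def helicityForm (α : E → E →L[ℝ] ℝ) (x : E) : E [⋀^Fin 3]→L[ℝ] ℝ :=
  covectorWedge (α x) (oneFormExtDeriv α x)

theorem helicityForm_apply (α : E → E →L[ℝ] ℝ) (x : E) (v : Fin 3 → E) :
    helicityForm α x v = α x (v 0) * oneFormExtDeriv α x ![v 1, v 2] +
      α x (v 1) * oneFormExtDeriv α x ![v 2, v 0] +
      α x (v 2) * oneFormExtDeriv α x ![v 0, v 1] := by
  have hremove₀ : Fin.removeNth 0 v = ![v 1, v 2] := by ext i; fin_cases i <;> rfl
  have hremove₁ : Fin.removeNth 1 v = ![v 0, v 2] := by ext i; fin_cases i <;> rfl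
  have hremove₂ : Fin.removeNth 2 v = ![v 0, v 1] := by ext i; fin_cases i <;> rfl
  simp only [helicityForm, covectorWedge_apply, Nat.reduceAdd, Fin.sum_univ_three, hremove₀,
    hremove₁, hremove₂, oneFormExtDeriv_apply, Matrix.cons_val_zero, Matrix.cons_val_one,
    smul_eq_mul, zsmul_eq_mul, Fin.val_zero, Fin.val_one, Fin.val_two]
  push_cast
  ring

theorem helicityForm_oneFormPullback {α : X → X →L[ℝ] ℝ} {ψ : E → X} {y : E}
    (hα : DifferentiableAt ℝ α (ψ y)) (hψ : ContDiffAt ℝ 2 ψ y) :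
    helicityForm (oneFormPullback α ψ) y =
      (helicityForm α (ψ y)).compContinuousLinearMap (fderiv ℝ ψ y) := by
  rw [helicityForm, helicityForm, covectorWedge_compContinuousLinearMap,
    oneFormExtDeriv_oneFormPullback hα hψ, oneFormPullback]

end ExteriorCalculus

section Integration

variable {E F : Type*} [NormedAddCommGroup E] [NormedSpace ℝ E] [MeasurableSpace E] [BorelSpace E]
  [NormedAddCommGroup F] [NormedSpace ℝ F] {n : ℕ} (μ : Measure E)

theorem integrable_fderiv_apply [IsFiniteMeasureOnCompacts μ] {f : E → F} (hf : ContDiff ℝ 1 f)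
    (hc : HasCompactSupport f) (v : E) : Integrable (fun y => fderiv ℝ f y v) μ :=
  ((hf.continuous_fderiv (by norm_num)).clm_apply continuous_const).integrable_of_hasCompactSupport
    (hc.fderiv_apply ℝ v)

variable [FiniteDimensional ℝ E] [μ.IsAddHaarMeasure]

theorem integral_fderiv_apply_eq_zero {f : E → F} (hf : ContDiff ℝ 1 f)
    (hc : HasCompactSupport f) (v : E) : ∫ y, fderiv ℝ f y v ∂μ = 0 := by
  simpa using integral_smul_fderiv_eq_neg_fderiv_smul_of_integrable (μ := μ) (f := fun _ => (1 : ℝ))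
    (g := f) (v := v) (by simp) (by simpa using integrable_fderiv_apply μ hf hc v)
    (by simpa using hf.continuous.integrable_of_hasCompactSupport hc) (by simp)
    fun y _ => hf.differentiable (by norm_num) y

theorem integral_extDeriv_apply_eq_zero {γ : E → E [⋀^Fin n]→L[ℝ] F} (hγ : ContDiff ℝ 1 γ)
    (hc : HasCompactSupport γ) (v : Fin (n + 1) → E) : ∫ y, extDeriv γ y v ∂μ = 0 := by
  have hcoeff (w : Fin n → E) : ContDiff ℝ 1 fun y => γ y w :=
    (ContinuousAlternatingMap.apply ℝ E F w).contDiff.comp hγ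
  have hcoeffc (w : Fin n → E) : HasCompactSupport fun y => γ y w :=
    hc.comp_left (g := (ContinuousAlternatingMap.apply ℝ E F w : _ → F)) (map_zero _)
  simp only [extDeriv_apply (hγ.differentiable (by norm_num) _), ← Int.cast_smul_eq_zsmul ℝ]
  rw [integral_finsetSum _ fun i _ =>
    (integrable_fderiv_apply μ (hcoeff _) (hcoeffc _) (v i)).fun_smul (((-1) ^ i.val : ℤ) : ℝ)]
  refine Finset.sum_eq_zero fun i _ => ?_
  rw [integral_smul, integral_fderiv_apply_eq_zero μ (hcoeff _) (hcoeffc _), smul_zero]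

theorem integral_covectorWedge_fderiv_apply_eq_zero {g : E → ℝ} (hg : ContDiff ℝ 1 g)
    {β : E → E [⋀^Fin n]→L[ℝ] F} (hβ : ContDiff ℝ 1 β) (hclosed : extDeriv β = 0)
    (hc : HasCompactSupport β) (v : Fin (n + 1) → E) :
    ∫ y, covectorWedge (fderiv ℝ g y) (β y) v ∂μ = 0 := by
  have hexact (y : E) : covectorWedge (fderiv ℝ g y) (β y) = extDeriv (g • β) y := by
    rw [extDeriv_smul_eq_covectorWedge_add (hg.differentiable (by norm_num) y)
      (hβ.differentiable (by norm_num) y), hclosed, Pi.zero_apply, smul_zero, add_zero]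
  simpa only [hexact] using integral_extDeriv_apply_eq_zero μ (hg.smul hβ) hc.smul_left v

theorem setIntegral_helicityForm_add_fderiv {α : E → E →L[ℝ] ℝ} (hα : ContDiff ℝ 1 α)
    (hdα : ContDiff ℝ 1 (oneFormExtDeriv α)) (hclosed : extDeriv (oneFormExtDeriv α) = 0)
    {g : E → ℝ} (hg : ContDiff ℝ 2 g) {K : Set E} (hK : IsCompact K)
    (hsupp : ∀ y ∉ K, oneFormExtDeriv α y = 0) (v : Fin 3 → E) :
    ∫ y in K, helicityForm (α + fderiv ℝ g) y v ∂μ = ∫ y in K, helicityForm α y v ∂μ := by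
  have hg' : Continuous (fderiv ℝ g) := hg.continuous_fderiv (by norm_num)
  have hsplit (y : E) : helicityForm (α + fderiv ℝ g) y v =
      helicityForm α y v + covectorWedge (fderiv ℝ g y) (oneFormExtDeriv α y) v := by
    simp only [helicityForm, oneFormExtDeriv_add_fderiv (hα.differentiable (by norm_num)) hg,
      Pi.add_apply, covectorWedge_add_left, ContinuousAlternatingMap.add_apply]
  have hzero : ∫ y in K, covectorWedge (fderiv ℝ g y) (oneFormExtDeriv α y) v ∂μ = 0 := by
    rw [setIntegral_eq_integral_of_forall_compl_eq_zero fun y hy => by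
      simp [hsupp y hy, covectorWedge_zero_right]]
    exact integral_covectorWedge_fderiv_apply_eq_zero μ (hg.of_le (by norm_num)) hdα hclosed
      (.intro hK hsupp) v
  have hint {ℓ : E → E →L[ℝ] ℝ} (hℓ : Continuous ℓ) :
      IntegrableOn (fun y => covectorWedge (ℓ y) (oneFormExtDeriv α y) v) K μ :=
    (continuous_covectorWedge_apply hℓ hdα.continuous v).continuousOn.integrableOn_compact hK
  simp only [hsplit]
  rw [integral_add (f := fun y => helicityForm α y v) (hint hα.continuous) (hint hg'), hzero,
    add_zero]

end Integration

section Flow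

open scoped Topology

variable {E X F : Type*} [NormedAddCommGroup E] [NormedSpace ℝ E]
  [NormedAddCommGroup X] [NormedSpace ℝ X] [NormedAddCommGroup F] [NormedSpace ℝ F]

theorem hasDerivAt_fderiv_of_contDiff_uncurry {Φ : ℝ → E → X}
    (hΦ : ContDiff ℝ 2 (Function.uncurry Φ)) (s : ℝ) (y : E) :
    HasDerivAt (fun t => fderiv ℝ (Φ t) y) (fderiv ℝ (fun z => deriv (fun t => Φ t z) s) y) s := by
  set D := fderiv ℝ (Function.uncurry Φ)
  have hD (t : ℝ) (z : E) : HasFDerivAt (Function.uncurry Φ) (D (t, z)) (t, z) :=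
    (hΦ.differentiable (by norm_num) (t, z)).hasFDerivAt
  have hspace (t : ℝ) : fderiv ℝ (Φ t) y = D (t, y) ∘L .inr ℝ ℝ E :=
    ((hD t y).comp y (hasFDerivAt_prodMk_right t y)).fderiv
  have hline (z : E) : HasDerivAt (fun t => (t, z)) ((1 : ℝ), (0 : E)) s :=
    (hasDerivAt_id s).prodMk (hasDerivAt_const s z)
  have htime (z : E) : deriv (fun t => Φ t z) s = D (s, z) (1, 0) :=
    HasDerivAt.deriv ((hD s z).comp_hasDerivAt s (hline z) :)
  have hD₂ : HasFDerivAt D (fderiv ℝ D (s, y)) (s, y) :=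
    ((hΦ.fderiv_right (m := 1) (by norm_num)).differentiable (by norm_num) (s, y)).hasFDerivAt
  have hmixed : fderiv ℝ (fun z => deriv (fun t => Φ t z) s) y =
      fderiv ℝ D (s, y) (1, 0) ∘L .inr ℝ ℝ E := by
    have hsymm : IsSymmSndFDerivAt ℝ (Function.uncurry Φ) (s, y) :=
      hΦ.contDiffAt.isSymmSndFDerivAt (by simp)
    rw [funext htime]
    refine ((hD₂.comp y (hasFDerivAt_prodMk_right s y)).clm_apply
      (hasFDerivAt_const ((1 : ℝ), (0 : E)) y)).fderiv.trans ?_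
    ext w
    simpa using hsymm (0, w) (1, 0)
  rw [hmixed, funext hspace]
  exact ((ContinuousLinearMap.compL ℝ E (ℝ × E) X).flip (.inr ℝ ℝ E)).hasFDerivAt.comp_hasDerivAt s
    (hD₂.comp_hasDerivAt s (hline y))

theorem hasDerivAt_fderiv_flow {Φ : ℝ → E → X} (hΦ : ContDiff ℝ 2 (Function.uncurry Φ))
    {U : X → X} (hflow : ∀ s y, HasDerivAt (fun t => Φ t y) (U (Φ s y)) s) {s : ℝ} {y : E}
    (hU : DifferentiableAt ℝ U (Φ s y)) :
    HasDerivAt (fun t => fderiv ℝ (Φ t) y) (fderiv ℝ U (Φ s y) ∘L fderiv ℝ (Φ s) y) s := by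
  have hΦs : DifferentiableAt ℝ (Φ s) y :=
    (hΦ.comp (contDiff_const.prodMk contDiff_id)).differentiable (by norm_num) y
  have hcomp : fderiv ℝ (fun z => deriv (fun t => Φ t z) s) y =
      fderiv ℝ U (Φ s y) ∘L fderiv ℝ (Φ s) y := by
    simp only [(hflow s _).deriv]
    exact fderiv_comp y hU hΦs
  exact hcomp ▸ hasDerivAt_fderiv_of_contDiff_uncurry hΦ s y

/-- The Lie derivative `L_U α` of a `1`-form along a vector field, encoded by the invariant form of
`U^μ ∂_μ α_ν + α_μ ∂_ν U^μ` rather than as a derivative along the flow of `U`. -/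
def oneFormLieDeriv (U : X → X) (α : X → X →L[ℝ] F) (x : X) : X →L[ℝ] F :=
  fderiv ℝ α x (U x) + α x ∘L fderiv ℝ U x

theorem hasDerivAt_oneFormPullback_flow {Φ : ℝ → E → X} (hΦ : ContDiff ℝ 2 (Function.uncurry Φ))
    {U : X → X} (hU : Differentiable ℝ U)
    (hflow : ∀ s y, HasDerivAt (fun t => Φ t y) (U (Φ s y)) s)
    {α : X → X →L[ℝ] F} (hα : Differentiable ℝ α) (s : ℝ) (y : E) :
    HasDerivAt (fun t => oneFormPullback α (Φ t) y)
      (oneFormPullback (oneFormLieDeriv U α) (Φ s) y) s := by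
  have hαΦ : HasDerivAt (fun t => α (Φ t y)) (fderiv ℝ α (Φ s y) (U (Φ s y))) s :=
    (hα (Φ s y)).hasFDerivAt.comp_hasDerivAt s (hflow s y)
  have hprod := hαΦ.clm_comp (hasDerivAt_fderiv_flow hΦ hflow (hU (Φ s y)))
  rwa [← ContinuousLinearMap.comp_assoc, ← ContinuousLinearMap.add_comp] at hprod

theorem hasFDerivAt_intervalIntegral_of_continuous {h : ℝ → E → F} {h' : ℝ → E → E →L[ℝ] F}
    (hcont : ∀ y, Continuous fun t => h t y) (hderiv : ∀ t y, HasFDerivAt (h t) (h' t y) y)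
    (hh' : Continuous (Function.uncurry h')) (a b : ℝ) (y : E) :
    HasFDerivAt (fun x => ∫ t in a..b, h t x) (∫ t in a..b, h' t y) y := by
  have hh'y (x : E) : Continuous fun t => h' t x := hh'.comp (by fun_prop : Continuous (·, x))
  have hbound : ∀ᶠ x in 𝓝 y, ∀ t ∈ Set.uIcc a b, ‖h' t x‖ < ‖h' t y‖ + 1 :=
    isCompact_uIcc.eventually_forall_of_forall_eventually fun t _ =>
      ContinuousAt.eventually_lt
        (f := fun z : E × ℝ => ‖h' z.2 z.1‖) (g := fun z => ‖h' z.2 y‖ + 1)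
        (hh'.comp continuous_swap).norm.continuousAt
        (((hh'y y).comp continuous_snd).norm.add_const 1).continuousAt (lt_add_one _)
  refine intervalIntegral.hasFDerivAt_integral_of_dominated_of_fderiv_le
    (F := fun x t => h t x) (F' := fun x t => h' t x) (bound := fun t => ‖h' t y‖ + 1) hbound
    (.of_forall fun x => (hcont x).aestronglyMeasurable) ((hcont y).intervalIntegrable a b)
    (hh'y y).aestronglyMeasurable ?_ (((hh'y y).norm.add_const 1).intervalIntegrable a b)
    (.of_forall fun t _ x _ => hderiv t x)
  exact .of_forall fun t ht x hx => (hx t (Set.uIoc_subset_uIcc ht)).le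

theorem exists_oneFormPullback_flow_eq_add_fderiv [CompleteSpace F] {Φ : ℝ → E → X}
    (hΦ : ContDiff ℝ 2 (Function.uncurry Φ)) {U : X → X} (hU : Differentiable ℝ U)
    (hflow : ∀ s y, HasDerivAt (fun t => Φ t y) (U (Φ s y)) s)
    {α : X → X →L[ℝ] F} (hα : ContDiff ℝ 1 α) {f : X → F} (hf : ContDiff ℝ 1 f)
    (hlie : oneFormLieDeriv U α = fderiv ℝ f) (s₀ s : ℝ) :
    ∃ g : E → F, ContDiff ℝ 2 g ∧
      oneFormPullback α (Φ s) = oneFormPullback α (Φ s₀) + fderiv ℝ g := by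
  have hΦs (t : ℝ) : ContDiff ℝ 2 (Φ t) := hΦ.comp (contDiff_const.prodMk contDiff_id)
  have hdf : Continuous (Function.uncurry fun t => oneFormPullback (fderiv ℝ f) (Φ t)) :=
    ((hf.continuous_fderiv (by norm_num)).comp hΦ.continuous).clm_comp <|
      (ContDiff.fderiv (f := fun (q : ℝ × E) z => Φ q.1 z) (m := 2) (n := 0)
        (hΦ.comp (by fun_prop : ContDiff ℝ 2 fun p : (ℝ × E) × E => (p.1.1, p.2))) contDiff_snd
        (by norm_num)).continuous
  have hderiv (t : ℝ) (y : E) :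
      HasFDerivAt (fun z => f (Φ t z)) (oneFormPullback (fderiv ℝ f) (Φ t) y) y :=
    (hf.differentiable (by norm_num) (Φ t y)).hasFDerivAt.comp y
      ((hΦs t).differentiable (by norm_num) y).hasFDerivAt
  have hftc (y : E) : ∫ t in s₀..s, oneFormPullback (fderiv ℝ f) (Φ t) y =
      oneFormPullback α (Φ s) y - oneFormPullback α (Φ s₀) y := by
    refine intervalIntegral.integral_eq_sub_of_hasDerivAt
      (f := fun t => oneFormPullback α (Φ t) y) (fun t _ => ?_)
      ((hdf.comp (by fun_prop : Continuous (·, y))).intervalIntegrable s₀ s)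
    exact hlie ▸ hasDerivAt_oneFormPullback_flow hΦ hU hflow (hα.differentiable (by norm_num)) t y
  have hg (y : E) : HasFDerivAt (fun z => ∫ t in s₀..s, f (Φ t z))
      (oneFormPullback α (Φ s) y - oneFormPullback α (Φ s₀) y) y :=
    hftc y ▸ hasFDerivAt_intervalIntegral_of_continuous
      (fun z => hf.continuous.comp (hΦ.continuous.comp (by fun_prop : Continuous (·, z))))
      hderiv hdf s₀ s y
  refine ⟨_, contDiff_succ_iff_hasFDerivAt.2 ⟨_, (contDiff_oneFormPullback hα (hΦs s)).sub
    (contDiff_oneFormPullback hα (hΦs s₀)), hg⟩, ?_⟩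
  ext1 y
  simp [(hg y).fderiv]

end Flow

theorem relativistic_helicity_conservation_general {E X : Type*}
    [NormedAddCommGroup E] [NormedSpace ℝ E] [FiniteDimensional ℝ E] [MeasurableSpace E]
    [BorelSpace E] (μ : Measure E) [μ.IsAddHaarMeasure] [NormedAddCommGroup X] [NormedSpace ℝ X]
    {Φ : ℝ → E → X} (hΦ : ContDiff ℝ 2 (Function.uncurry Φ)) {U : X → X} (hU : Differentiable ℝ U)
    (hflow : ∀ s y, HasDerivAt (fun t => Φ t y) (U (Φ s y)) s)
    {α : X → X →L[ℝ] ℝ} (hα : ContDiff ℝ 2 α) {f : X → ℝ} (hf : ContDiff ℝ 1 f)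
    (hlie : oneFormLieDeriv U α = fderiv ℝ f) {K : Set E} (hK : IsCompact K) {s₀ : ℝ}
    (hsupp : ∀ y ∉ K,
      (oneFormExtDeriv α (Φ s₀ y)).compContinuousLinearMap (fderiv ℝ (Φ s₀) y) = 0)
    (v : Fin 3 → E) (s₁ s₂ : ℝ) :
    ∫ y in K, (helicityForm α (Φ s₁ y)).compContinuousLinearMap (fderiv ℝ (Φ s₁) y) v ∂μ =
      ∫ y in K, (helicityForm α (Φ s₂ y)).compContinuousLinearMap (fderiv ℝ (Φ s₂) y) v ∂μ := by
  have hα₁ : ContDiff ℝ 1 α := hα.of_le (by norm_num)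
  have hαd : Differentiable ℝ α := hα₁.differentiable (by norm_num)
  have hΦs (s : ℝ) : ContDiff ℝ 2 (Φ s) := hΦ.comp (contDiff_const.prodMk contDiff_id)
  simp only [← helicityForm_oneFormPullback (hαd _) (hΦs _).contDiffAt]
  simp only [← oneFormExtDeriv_oneFormPullback (hαd _) (hΦs _).contDiffAt] at hsupp
  have hconst (s : ℝ) : ∫ y in K, helicityForm (oneFormPullback α (Φ s)) y v ∂μ =
      ∫ y in K, helicityForm (oneFormPullback α (Φ s₀)) y v ∂μ := by
    obtain ⟨g, hg, hpull⟩ :=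
      exists_oneFormPullback_flow_eq_add_fderiv hΦ hU hflow hα₁ hf hlie s₀ s
    rw [hpull]
    exact setIntegral_helicityForm_add_fderiv μ (contDiff_oneFormPullback hα₁ (hΦs s₀))
      (contDiff_oneFormExtDeriv_oneFormPullback hα (hΦs s₀))
      (extDeriv_oneFormExtDeriv_oneFormPullback hα (hΦs s₀)) hg hK hsupp v
  rw [hconst s₁, hconst s₂]

section Coordinates

/-- The `1`-form `P_μ dx^μ` with components `P`, which translates the component formulas on `V4`
into differential forms. -/
def toOneForm (P : V4 → V4) (x : V4) : V4 →L[ℝ] ℝ :=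
  ∑ μ, P x μ • ContinuousLinearMap.proj μ

theorem toOneForm_apply (P : V4 → V4) (x v : V4) : toOneForm P x v = ∑ μ, P x μ * v μ := by
  simp [toOneForm]

theorem contDiff_toOneForm {n : WithTop ℕ∞} {P : V4 → V4} (hP : ContDiff ℝ n P) :
    ContDiff ℝ n (toOneForm P) := by
  unfold toOneForm
  fun_prop

theorem fderiv_apply_eq_sum_pd4 (f : V4 → ℝ) (x v : V4) :
    fderiv ℝ f x v = ∑ μ, v μ * pd4 μ f x := by
  conv_lhs => rw [pi_eq_sum_univ' v]
  simp [pd4]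

theorem fderiv_toOneForm_apply {P : V4 → V4} {x : V4} (hP : DifferentiableAt ℝ P x) (u v : V4) :
    fderiv ℝ (toOneForm P) x u v = ∑ ν, (∑ μ, u μ * pd4 μ (fun y => P y ν) x) * v ν := by
  have hcoord (ν : Fin 4) :
      HasFDerivAt (fun y => P y ν) (fderiv ℝ (fun y => P y ν) x) x :=
    (differentiableAt_pi.1 hP ν).hasFDerivAt
  have hsum : HasFDerivAt (toOneForm P) _ x :=
    HasFDerivAt.fun_sum (u := Finset.univ) fun ν _ =>
      (hcoord ν).smul_const (ContinuousLinearMap.proj ν : V4 →L[ℝ] ℝ)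
  rw [hsum.fderiv]
  simp [fderiv_apply_eq_sum_pd4]

theorem oneFormExtDeriv_toOneForm_apply {P : V4 → V4} {x : V4} (hP : DifferentiableAt ℝ P x)
    (v : Fin 2 → V4) :
    oneFormExtDeriv (toOneForm P) x v = ∑ α, ∑ β, vort P α β x * v 0 α * v 1 β := by
  simp only [oneFormExtDeriv_apply, fderiv_toOneForm_apply hP, vort, Fin.sum_univ_four]
  ring

theorem oneFormLieDeriv_toOneForm_apply {U P : V4 → V4} {x : V4} (hU : DifferentiableAt ℝ U x)
    (hP : DifferentiableAt ℝ P x) (v : V4) :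
    oneFormLieDeriv U (toOneForm P) x v = ∑ ν, v ν * lieDeriv1 U P x ν := by
  have hUv (μ : Fin 4) : fderiv ℝ U x v μ = ∑ ν, v ν * pd4 ν (fun y => U y μ) x := by
    rw [← fderiv_apply_eq_sum_pd4, fderiv_apply hU]
    rfl
  simp only [oneFormLieDeriv, _root_.add_apply, ContinuousLinearMap.comp_apply,
    fderiv_toOneForm_apply hP, toOneForm_apply, hUv, lieDeriv1, Fin.sum_univ_four]
  ring

theorem oneFormExtDeriv_toOneForm_eq_zero {P : V4 → V4} {x : V4} (hP : DifferentiableAt ℝ P x)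
    (hvort : ∀ μ ν, vort P μ ν x = 0) : oneFormExtDeriv (toOneForm P) x = 0 := by
  ext v
  simp [oneFormExtDeriv_toOneForm_apply hP, hvort]

theorem oneFormLieDeriv_toOneForm_eq_fderiv {U P : V4 → V4} {f : V4 → ℝ} {x : V4}
    (hU : DifferentiableAt ℝ U x) (hP : DifferentiableAt ℝ P x)
    (heqm : ∀ ν, lieDeriv1 U P x ν = pd4 ν f x) :
    oneFormLieDeriv U (toOneForm P) x = fderiv ℝ f x := by
  ext1 v
  simp only [oneFormLieDeriv_toOneForm_apply hU hP, fderiv_apply_eq_sum_pd4, heqm]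

theorem helicityForm_toOneForm_apply {P : V4 → V4} {x : V4} (hP : DifferentiableAt ℝ P x)
    (v : Fin 3 → V4) :
    helicityForm (toOneForm P) x v = Wform P x (v 0) (v 1) (v 2) := by
  simp only [helicityForm_apply, oneFormExtDeriv_toOneForm_apply hP, toOneForm_apply, Wform]
  rfl

theorem contDiff_emb {n : WithTop ℕ∞} : ContDiff ℝ n emb :=
  contDiff_pi.2 fun
    | 0 => contDiff_const
    | 1 => contDiff_apply ℝ ℝ 0
    | 2 => contDiff_apply ℝ ℝ 1
    | 3 => contDiff_apply ℝ ℝ 2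

theorem relHelicity_eq_setIntegral_helicityForm (φ : ℝ → V4 → V4) {P : V4 → V4}
    (hP : Differentiable ℝ P) (V₀ : Set V3) (s : ℝ) :
    relHelicity φ P V₀ s =
      ∫ y in V₀, (helicityForm (toOneForm P) (φ s (emb y))).compContinuousLinearMap
        (fderiv ℝ (fun z => φ s (emb z)) y) fun i => Pi.single i 1 := by
  simp only [relHelicity, ContinuousAlternatingMap.compContinuousLinearMap_apply,
    helicityForm_toOneForm_apply (hP _), Function.comp_apply]

end Coordinates

/-- Relativistic helicity conservation: under the barotropic equation of motion
    L_U P = c⁻¹ df, the relativistic helicity 𝔠(s) on a co-moving volume containing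
    the support of the vorticity is independent of the proper-time parameter s. -/
theorem relativistic_helicity_conservation (c : ℝ) (hc : 0 < c)
    (U : V4 → V4) (hU : ContDiff ℝ 2 U)
    (φ : ℝ → V4 → V4) (hφ : ContDiff ℝ 2 (fun q : ℝ × V4 => φ q.1 q.2))
    (hφ0 : φ 0 = id)
    (hflow : ∀ s x, HasDerivAt (fun s => φ s x) (U (φ s x)) s)
    (hdiffeo : ∀ s, Function.Bijective (φ s))
    (P : V4 → V4) (hP : ContDiff ℝ 2 P)
    (f : V4 → ℝ) (hf : ContDiff ℝ 1 f)
    (heqm : ∀ x ν, lieDeriv1 U P x ν = c⁻¹ * pd4 ν f x)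
    (V₀ : Set V3) (hV₀c : IsCompact V₀) (hV₀m : MeasurableSet V₀)
    (hsupp : closure {y : V3 | ∃ μ ν, vort P μ ν (emb y) ≠ 0} ⊆ interior V₀) :
    ∀ s₁ s₂ : ℝ, relHelicity φ P V₀ s₁ = relHelicity φ P V₀ s₂ := by
  have hPd : Differentiable ℝ P := hP.differentiable (by norm_num)
  have hUd : Differentiable ℝ U := hU.differentiable (by norm_num)
  have hΦ : ContDiff ℝ 2 (Function.uncurry fun s y => φ s (emb y)) :=
    hφ.comp (contDiff_fst.prodMk (contDiff_emb.comp contDiff_snd))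
  have hlie : oneFormLieDeriv U (toOneForm P) = fderiv ℝ (c⁻¹ • f) :=
    funext fun x => oneFormLieDeriv_toOneForm_eq_fderiv (hUd x) (hPd x) fun ν => by
      simp [heqm, pd4, fderiv_const_smul (hf.differentiable (by norm_num) x)]
  have hcurl : ∀ y ∉ V₀, oneFormExtDeriv (toOneForm P) (emb y) = 0 := by
    refine fun y hy => oneFormExtDeriv_toOneForm_eq_zero (hPd _) ?_
    by_contra! hvort
    exact hy (interior_subset (hsupp (subset_closure hvort)))
  intro s₁ s₂
  simp only [relHelicity_eq_setIntegral_helicityForm φ hPd]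
  refine relativistic_helicity_conservation_general volume hΦ hUd (fun s y => hflow s (emb y))
    (contDiff_toOneForm hP) (hf.const_smul c⁻¹) hlie hV₀c (s₀ := 0) (fun y hy => ?_) _ s₁ s₂
  ext
  simp [hφ0, hcurl y hy]
end
end

section
/- (Divergence-free modified non-relativistic helicity current.) Let c > 0, let 𝒜⁰ : ℝ × ℝ³ → ℝ and 𝓐 : ℝ × ℝ³ → ℝ³ be C², let θ : ℝ × ℝ³ → ℝ be C¹, and suppose the non-relativistic (γ ≡ 1) barotropic equation of motion ℰ + (v/c)×ℬ = −c⁻¹ ∇θ holds at every point, where ℰ = −∇𝒜⁰ − c⁻¹∂_t𝓐, ℬ = ∇×𝓐, and v : ℝ × ℝ³ → ℝ³ is any velocity field. Then the modified helicity four-current K'⁰ = 𝓐·ℬ, K' = 𝒜⁰ℬ + ℰ×𝓐 − 2c⁻¹θℬ is divergence-free: c⁻¹ ∂_t(𝓐·ℬ) + ∇·(𝒜⁰ℬ + ℰ×𝓐 − 2c⁻¹ θ ℬ) = 0 at every point. -/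
open MeasureTheory

noncomputable section

/-- Euclidean dot product on ℝ³. -/
def dot3 (a b : V3) : ℝ := ∑ i, a i * b i

/-- Cross product on ℝ³. -/
def cross3 (a b : V3) : V3 := fun i => a (i + 1) * b (i + 2) - a (i + 2) * b (i + 1)

/-- Time derivative ∂_t of a scalar function on ℝ × ℝ³. -/
def pdt (f : ℝ × V3 → ℝ) (p : ℝ × V3) : ℝ := fderiv ℝ f p ((1 : ℝ), (0 : V3))

/-- Spatial derivative ∂_j of a scalar function on ℝ × ℝ³. -/
def pdx (j : Fin 3) (f : ℝ × V3 → ℝ) (p : ℝ × V3) : ℝ :=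
  fderiv ℝ f p ((0 : ℝ), Pi.single j 1)

/-- Spatial gradient. -/
def grad3 (f : ℝ × V3 → ℝ) (p : ℝ × V3) : V3 := fun j => pdx j f p

/-- Spatial curl. -/
def curl3 (A : ℝ × V3 → V3) (p : ℝ × V3) : V3 := fun i =>
  pdx (i + 1) (fun q => A q (i + 2)) p - pdx (i + 2) (fun q => A q (i + 1)) p

/-- Spatial divergence. -/
def div3 (A : ℝ × V3 → V3) (p : ℝ × V3) : ℝ := ∑ j, pdx j (fun q => A q j) p

/-- ℰ = −∇𝒜⁰ − c⁻¹ ∂_t 𝓐. -/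
def Efield (c : ℝ) (A0 : ℝ × V3 → ℝ) (A : ℝ × V3 → V3) (p : ℝ × V3) : V3 := fun i =>
  -grad3 A0 p i - c⁻¹ * fderiv ℝ (fun q => A q i) p ((1 : ℝ), (0 : V3))

/-- ℬ = ∇×𝓐. -/
def Bfield (A : ℝ × V3 → V3) (p : ℝ × V3) : V3 := curl3 A p

/-!
The homogeneous Maxwell equations `∇·ℬ = 0` and `∇×ℰ = -c⁻¹ ∂_t ℬ` hold for any `C²` potential,
because mixed partials commute. With the product rules they give the helicity balance
`c⁻¹ ∂_t(𝓐·ℬ) + ∇·(𝒜⁰ℬ + ℰ×𝓐) = -2 ℰ·ℬ`. Since `v × ℬ` is orthogonal to `ℬ`, the equation of motion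
turns the source `-2 ℰ·ℬ` into `2c⁻¹ ∇θ·ℬ`, which, as `∇·ℬ = 0`, is exactly
`∇·(2c⁻¹θℬ)`.
-/

section SecondDerivative

variable {𝕜 E F : Type*} [NontriviallyNormedField 𝕜] [NormedAddCommGroup E] [NormedSpace 𝕜 E]
  [NormedAddCommGroup F] [NormedSpace 𝕜 F] {f : E → F} {x : E}

theorem differentiableAt_fderiv (hf : ContDiffAt 𝕜 2 f x) : DifferentiableAt 𝕜 (fderiv 𝕜 f) x :=
  (hf.fderiv_right (m := 1) (by norm_num)).differentiableAt one_ne_zero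

theorem differentiableAt_fderiv_apply (hf : ContDiffAt 𝕜 2 f x) (w : E) :
    DifferentiableAt 𝕜 (fun y => fderiv 𝕜 f y w) x :=
  (differentiableAt_fderiv hf).clm_apply (differentiableAt_const w)

theorem fderiv_fderiv_apply_comm {n : WithTop ℕ∞} (hf : ContDiffAt 𝕜 n f x)
    (hn : minSmoothness 𝕜 2 ≤ n) (u w : E) :
    fderiv 𝕜 (fun y => fderiv 𝕜 f y w) x u = fderiv 𝕜 (fun y => fderiv 𝕜 f y u) x w := by
  have hdiff : DifferentiableAt 𝕜 (fderiv 𝕜 f) x :=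
    differentiableAt_fderiv (hf.of_le (le_minSmoothness.trans hn))
  have second_derivative (a b : E) :
      fderiv 𝕜 (fun y => fderiv 𝕜 f y b) x a = fderiv 𝕜 (fderiv 𝕜 f) x a b := by
    simp [fderiv_clm_apply hdiff (differentiableAt_const b)]
  rw [second_derivative, second_derivative, (hf.isSymmSndFDerivAt hn).eq]

end SecondDerivative

/-- Time derivative ∂_t of a vector field on ℝ × ℝ³, taken componentwise; it makes Faraday's law an
identity between vectors. -/
def pdt3 (A : ℝ × V3 → V3) (p : ℝ × V3) : V3 := fun i => pdt (fun q => A q i) p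

section VectorAlgebra

open scoped Matrix

theorem dot3_eq_dotProduct (a b : V3) : dot3 a b = a ⬝ᵥ b := rfl

theorem cross3_eq_crossProduct (a b : V3) : cross3 a b = a ⨯₃ b := by
  ext i
  fin_cases i <;> simp [cross3, cross_apply]

theorem dot3_cross3_self (a b : V3) : dot3 (cross3 a b) b = 0 := by
  rw [dot3_eq_dotProduct, cross3_eq_crossProduct, dotProduct_comm, dot_cross_self]

theorem mul_dot3_eq_neg_dot3_of_add_cross3 {c : ℝ} (hc : c ≠ 0) {E G u B : V3}
    (h : ∀ i, E i + cross3 u B i / c = -c⁻¹ * G i) : c * dot3 E B = -dot3 G B := by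
  have hE : c • E = -G - cross3 u B := by
    ext i
    have hi := h i
    simp only [Pi.smul_apply, smul_eq_mul, Pi.sub_apply, Pi.neg_apply]
    field_simp at hi
    linarith
  calc c * dot3 E B = dot3 (c • E) B := (smul_dotProduct c E B).symm
    _ = -dot3 G B - dot3 (cross3 u B) B := by
        simp only [hE, dot3_eq_dotProduct, sub_dotProduct, neg_dotProduct]
    _ = -dot3 G B := by rw [dot3_cross3_self, sub_zero]

end VectorAlgebra

section ProductRules

variable {f g : ℝ × V3 → ℝ} {A B : ℝ × V3 → V3} {p : ℝ × V3}

theorem pdx_add (j : Fin 3) (hf : DifferentiableAt ℝ f p) (hg : DifferentiableAt ℝ g p) :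
    pdx j (fun q => f q + g q) p = pdx j f p + pdx j g p := by
  simp [pdx, fderiv_fun_add hf hg]

theorem pdx_sub (j : Fin 3) (hf : DifferentiableAt ℝ f p) (hg : DifferentiableAt ℝ g p) :
    pdx j (fun q => f q - g q) p = pdx j f p - pdx j g p := by
  simp [pdx, fderiv_fun_sub hf hg]

theorem pdx_mul (j : Fin 3) (hf : DifferentiableAt ℝ f p) (hg : DifferentiableAt ℝ g p) :
    pdx j (fun q => f q * g q) p = pdx j f p * g p + f p * pdx j g p := by
  simp only [pdx, fderiv_fun_mul hf hg, add_apply, smul_apply, smul_eq_mul]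
  ring

theorem pdx_neg (j : Fin 3) (f : ℝ × V3 → ℝ) (p : ℝ × V3) :
    pdx j (fun q => -f q) p = -pdx j f p := by
  simp [pdx, fderiv_fun_neg]

theorem pdx_const_mul (j : Fin 3) (k : ℝ) (hf : DifferentiableAt ℝ f p) :
    pdx j (fun q => k * f q) p = k * pdx j f p := by
  simp [pdx, fderiv_const_mul hf]

theorem pdt_sub (hf : DifferentiableAt ℝ f p) (hg : DifferentiableAt ℝ g p) :
    pdt (fun q => f q - g q) p = pdt f p - pdt g p := by
  simp [pdt, fderiv_fun_sub hf hg]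

theorem pdt_mul (hf : DifferentiableAt ℝ f p) (hg : DifferentiableAt ℝ g p) :
    pdt (fun q => f q * g q) p = pdt f p * g p + f p * pdt g p := by
  simp only [pdt, fderiv_fun_mul hf hg, add_apply, smul_apply, smul_eq_mul]
  ring

theorem pdt_dot3 (hA : DifferentiableAt ℝ A p) (hB : DifferentiableAt ℝ B p) :
    pdt (fun q => dot3 (A q) (B q)) p = dot3 (pdt3 A p) (B p) + dot3 (A p) (pdt3 B p) := by
  have hA' := differentiableAt_pi.1 hA
  have hB' := differentiableAt_pi.1 hB
  calc pdt (fun q => dot3 (A q) (B q)) p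
      = ∑ i, pdt (fun q => A q i * B q i) p := by
        simp only [pdt, dot3]
        rw [fderiv_fun_sum fun i _ => (hA' i).fun_mul (hB' i), sum_apply]
    _ = dot3 (pdt3 A p) (B p) + dot3 (A p) (pdt3 B p) := by
        simp only [pdt_mul (hA' _) (hB' _), Finset.sum_add_distrib, dot3, pdt3]

theorem grad3_const_mul (k : ℝ) (hf : DifferentiableAt ℝ f p) :
    grad3 (fun q => k * f q) p = k • grad3 f p :=
  funext fun j => pdx_const_mul j k hf

theorem curl3_neg (A : ℝ × V3 → V3) (p : ℝ × V3) :
    curl3 (fun q => -A q) p = -curl3 A p := by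
  ext i
  simp only [curl3, Pi.neg_apply, pdx_neg]
  ring

theorem curl3_add (hA : DifferentiableAt ℝ A p) (hB : DifferentiableAt ℝ B p) :
    curl3 (fun q => A q + B q) p = curl3 A p + curl3 B p := by
  ext i
  simp only [curl3, Pi.add_apply,
    pdx_add _ (differentiableAt_pi.1 hA _) (differentiableAt_pi.1 hB _)]
  ring

theorem curl3_const_smul (k : ℝ) (hA : DifferentiableAt ℝ A p) :
    curl3 (fun q => k • A q) p = k • curl3 A p := by
  ext i
  simp only [curl3, Pi.smul_apply, smul_eq_mul, pdx_const_mul _ k (differentiableAt_pi.1 hA _)]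
  ring

theorem div3_add (hA : DifferentiableAt ℝ A p) (hB : DifferentiableAt ℝ B p) :
    div3 (fun q => A q + B q) p = div3 A p + div3 B p := by
  simp only [div3, Pi.add_apply, Finset.sum_add_distrib,
    pdx_add _ (differentiableAt_pi.1 hA _) (differentiableAt_pi.1 hB _)]

theorem div3_sub (hA : DifferentiableAt ℝ A p) (hB : DifferentiableAt ℝ B p) :
    div3 (fun q => A q - B q) p = div3 A p - div3 B p := by
  simp only [div3, Pi.sub_apply, Finset.sum_sub_distrib,
    pdx_sub _ (differentiableAt_pi.1 hA _) (differentiableAt_pi.1 hB _)]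

theorem div3_smul (hf : DifferentiableAt ℝ f p) (hA : DifferentiableAt ℝ A p) :
    div3 (fun q => f q • A q) p = dot3 (grad3 f p) (A p) + f p * div3 A p := by
  simp only [div3, dot3, grad3, Pi.smul_apply, smul_eq_mul, Finset.sum_add_distrib,
    Finset.mul_sum, pdx_mul _ hf (differentiableAt_pi.1 hA _)]

theorem differentiableAt_cross3 (hA : DifferentiableAt ℝ A p) (hB : DifferentiableAt ℝ B p) :
    DifferentiableAt ℝ (fun q => cross3 (A q) (B q)) p := by
  unfold cross3
  fun_prop

theorem div3_cross3 (hA : DifferentiableAt ℝ A p) (hB : DifferentiableAt ℝ B p) :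
    div3 (fun q => cross3 (A q) (B q)) p = dot3 (curl3 A p) (B p) - dot3 (A p) (curl3 B p) := by
  have hA' := differentiableAt_pi.1 hA
  have hB' := differentiableAt_pi.1 hB
  simp only [div3, cross3, pdx_sub _ ((hA' _).fun_mul (hB' _)) ((hA' _).fun_mul (hB' _)),
    pdx_mul _ (hA' _) (hB' _), dot3, curl3, Fin.sum_univ_three, Fin.isValue, Fin.reduceAdd,
    zero_add]
  ring

end ProductRules

section MixedPartials

variable {f : ℝ × V3 → ℝ} {A : ℝ × V3 → V3} {p : ℝ × V3}

theorem differentiableAt_grad3 (hf : ContDiffAt ℝ 2 f p) : DifferentiableAt ℝ (grad3 f) p :=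
  differentiableAt_pi.2 fun _ => differentiableAt_fderiv_apply hf _

theorem differentiableAt_pdt3 (hA : ContDiffAt ℝ 2 A p) : DifferentiableAt ℝ (pdt3 A) p :=
  differentiableAt_pi.2 fun i => differentiableAt_fderiv_apply (contDiffAt_pi.1 hA i) _

theorem differentiableAt_curl3 (hA : ContDiffAt ℝ 2 A p) : DifferentiableAt ℝ (curl3 A) p :=
  differentiableAt_pi.2 fun i =>
    (differentiableAt_fderiv_apply (contDiffAt_pi.1 hA (i + 2)) _).sub
      (differentiableAt_fderiv_apply (contDiffAt_pi.1 hA (i + 1)) _)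

theorem pdx_pdx_comm (hf : ContDiffAt ℝ 2 f p) (i j : Fin 3) :
    pdx i (pdx j f) p = pdx j (pdx i f) p :=
  fderiv_fderiv_apply_comm hf (by simp) _ _

theorem pdx_pdt_comm (hf : ContDiffAt ℝ 2 f p) (i : Fin 3) :
    pdx i (pdt f) p = pdt (pdx i f) p :=
  fderiv_fderiv_apply_comm hf (by simp) _ _

theorem curl3_grad3 (hf : ContDiffAt ℝ 2 f p) : curl3 (grad3 f) p = 0 :=
  funext fun i => sub_eq_zero.2 (pdx_pdx_comm hf (i + 1) (i + 2))

theorem curl3_pdt3 (hA : ContDiffAt ℝ 2 A p) : curl3 (pdt3 A) p = pdt3 (curl3 A) p := by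
  have hA' := contDiffAt_pi.1 hA
  ext i
  calc curl3 (pdt3 A) p i
      = pdt (pdx (i + 1) fun q => A q (i + 2)) p - pdt (pdx (i + 2) fun q => A q (i + 1)) p :=
        congrArg₂ _ (pdx_pdt_comm (hA' _) _) (pdx_pdt_comm (hA' _) _)
    _ = pdt3 (curl3 A) p i :=
        (pdt_sub (differentiableAt_fderiv_apply (hA' _) _)
          (differentiableAt_fderiv_apply (hA' _) _)).symm

theorem div3_curl3 (hA : ContDiffAt ℝ 2 A p) : div3 (curl3 A) p = 0 := by
  have hA' := contDiffAt_pi.1 hA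
  have pdx_curl3 (i : Fin 3) : pdx i (fun q => curl3 A q i) p =
      pdx i (pdx (i + 1) fun q => A q (i + 2)) p - pdx i (pdx (i + 2) fun q => A q (i + 1)) p :=
    pdx_sub i (differentiableAt_fderiv_apply (hA' _) _) (differentiableAt_fderiv_apply (hA' _) _)
  simp only [div3, pdx_curl3, Fin.sum_univ_three, Fin.isValue, Fin.reduceAdd, zero_add]
  rw [pdx_pdx_comm (hA' 2) 0 1, pdx_pdx_comm (hA' 1) 0 2, pdx_pdx_comm (hA' 0) 1 2]
  ring

end MixedPartials

section Helicity

variable {A0 : ℝ × V3 → ℝ} {A : ℝ × V3 → V3} {p : ℝ × V3}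

theorem Efield_eq (c : ℝ) (A0 : ℝ × V3 → ℝ) (A : ℝ × V3 → V3) (p : ℝ × V3) :
    Efield c A0 A p = -(grad3 A0 p + c⁻¹ • pdt3 A p) := by
  ext i
  simp [Efield, pdt3, pdt, sub_eq_add_neg, add_comm]

theorem differentiableAt_Efield (c : ℝ) (hA0 : ContDiffAt ℝ 2 A0 p) (hA : ContDiffAt ℝ 2 A p) :
    DifferentiableAt ℝ (Efield c A0 A) p := by
  rw [funext (Efield_eq c A0 A)]
  exact ((differentiableAt_grad3 hA0).add ((differentiableAt_pdt3 hA).const_smul c⁻¹)).neg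

theorem curl3_Efield (c : ℝ) (hA0 : ContDiffAt ℝ 2 A0 p) (hA : ContDiffAt ℝ 2 A p) :
    curl3 (Efield c A0 A) p = -(c⁻¹ • pdt3 (Bfield A) p) := by
  have hdt := differentiableAt_pdt3 hA
  rw [funext (Efield_eq c A0 A), curl3_neg,
    curl3_add (differentiableAt_grad3 hA0) (hdt.fun_const_smul c⁻¹), curl3_const_smul _ hdt,
    curl3_grad3 hA0, curl3_pdt3 hA, zero_add]
  rfl

theorem differentiableAt_Bfield (hA : ContDiffAt ℝ 2 A p) : DifferentiableAt ℝ (Bfield A) p :=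
  differentiableAt_curl3 hA

theorem div3_smul_Bfield {f : ℝ × V3 → ℝ} (hf : DifferentiableAt ℝ f p)
    (hA : ContDiffAt ℝ 2 A p) :
    div3 (fun q => f q • Bfield A q) p = dot3 (grad3 f p) (Bfield A p) := by
  have div_B : div3 (Bfield A) p = 0 := div3_curl3 hA
  rw [div3_smul hf (differentiableAt_Bfield hA), div_B, mul_zero, add_zero]

theorem helicity_balance (c : ℝ) (hA0 : ContDiffAt ℝ 2 A0 p) (hA : ContDiffAt ℝ 2 A p) :
    c⁻¹ * pdt (fun q => dot3 (A q) (Bfield A q)) p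
        + div3 (fun q => A0 q • Bfield A q + cross3 (Efield c A0 A q) (A q)) p
      = -2 * dot3 (Efield c A0 A p) (Bfield A p) := by
  have hA0' : DifferentiableAt ℝ A0 p := hA0.differentiableAt two_ne_zero
  have hA' : DifferentiableAt ℝ A p := hA.differentiableAt two_ne_zero
  have hB : DifferentiableAt ℝ (Bfield A) p := differentiableAt_Bfield hA
  have hE := differentiableAt_Efield c hA0 hA
  rw [pdt_dot3 hA' hB, div3_add (hA0'.fun_smul hB) (differentiableAt_cross3 hE hA'),
    div3_smul_Bfield hA0' hA, div3_cross3 hE hA', curl3_Efield c hA0 hA, Efield_eq]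
  simp only [dot3_eq_dotProduct, neg_dotProduct, add_dotProduct, smul_dotProduct, smul_eq_mul,
    dotProduct_comm (pdt3 (Bfield A) p) (A p), Bfield]
  ring

theorem modified_helicity_current_divergence_free_general {c : ℝ} (hc : c ≠ 0)
    {θ : ℝ × V3 → ℝ} (hA0 : ContDiffAt ℝ 2 A0 p) (hA : ContDiffAt ℝ 2 A p)
    (hθ : DifferentiableAt ℝ θ p)
    (heqm : c * dot3 (Efield c A0 A p) (Bfield A p) = -dot3 (grad3 θ p) (Bfield A p)) :
    c⁻¹ * pdt (fun q => dot3 (A q) (Bfield A q)) p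
        + div3 (fun q i =>
            A0 q * Bfield A q i + cross3 (Efield c A0 A q) (A q) i
              - 2 * c⁻¹ * θ q * Bfield A q i) p
      = 0 := by
  have hA' : DifferentiableAt ℝ A p := hA.differentiableAt two_ne_zero
  have hB : DifferentiableAt ℝ (Bfield A) p := differentiableAt_Bfield hA
  have hK : DifferentiableAt ℝ
      (fun q => A0 q • Bfield A q + cross3 (Efield c A0 A q) (A q)) p :=
    ((hA0.differentiableAt two_ne_zero).fun_smul hB).fun_add
      (differentiableAt_cross3 (differentiableAt_Efield c hA0 hA) hA')
  have div_correction : div3 (fun q => (2 * c⁻¹ * θ q) • Bfield A q) p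
      = 2 * c⁻¹ * dot3 (grad3 θ p) (Bfield A p) := by
    rw [div3_smul_Bfield (hθ.const_mul _) hA, grad3_const_mul _ hθ]
    exact smul_dotProduct _ _ _
  have div_K' := div3_sub hK ((hθ.const_mul (2 * c⁻¹)).fun_smul hB)
  have hEB : dot3 (Efield c A0 A p) (Bfield A p)
      = -c⁻¹ * dot3 (grad3 θ p) (Bfield A p) := by
    field_simp
    rw [mul_comm, heqm]
  calc _ = c⁻¹ * pdt (fun q => dot3 (A q) (Bfield A q)) p
          + (div3 (fun q => A0 q • Bfield A q + cross3 (Efield c A0 A q) (A q)) p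
            - div3 (fun q => (2 * c⁻¹ * θ q) • Bfield A q) p) := congrArg _ div_K'
    _ = -2 * dot3 (Efield c A0 A p) (Bfield A p)
          - 2 * c⁻¹ * dot3 (grad3 θ p) (Bfield A p) := by
        rw [← add_sub_assoc, helicity_balance c hA0 hA, div_correction]
    _ = 0 := by rw [hEB]; ring

end Helicity

/-- In the non-relativistic (γ ≡ 1) barotropic case ℰ + (v/c)×ℬ = −c⁻¹∇θ, the modified
    helicity four-current K'⁰ = 𝓐·ℬ, K' = 𝒜⁰ℬ + ℰ×𝓐 − 2c⁻¹θℬ is divergence-free. -/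
theorem modified_helicity_current_divergence_free (c : ℝ) (hc : 0 < c)
    (A0 : ℝ × V3 → ℝ) (A : ℝ × V3 → V3) (θ : ℝ × V3 → ℝ) (v : ℝ × V3 → V3)
    (hA0 : ContDiff ℝ 2 A0) (hA : ContDiff ℝ 2 A) (hθ : ContDiff ℝ 1 θ)
    (heqm : ∀ p, ∀ i : Fin 3,
      Efield c A0 A p i + cross3 (v p) (Bfield A p) i / c = -c⁻¹ * grad3 θ p i) :
    ∀ p : ℝ × V3,
      c⁻¹ * pdt (fun q => dot3 (A q) (Bfield A q)) p
        + div3 (fun q i =>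
            A0 q * Bfield A q i + cross3 (Efield c A0 A q) (A q) i
              - 2 * c⁻¹ * θ q * Bfield A q i) p
      = 0 :=
  fun p => modified_helicity_current_divergence_free_general hc.ne' hA0.contDiffAt hA.contDiffAt
    (hθ.differentiable one_ne_zero p) (mul_dot3_eq_neg_dot3_of_add_cross3 hc.ne' (heqm p))
end
end
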